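/- Let $k$ be an algebraically closed field of characteristic $p > 0$, $R_F = k[x,y]/(F)$ where $F \in k[x,y]$ is a product of pairwise non-associate linear forms $\ell_1, \ldots, \ell_s$ (each appearing to the first power), and $q = p^e$. Then the tight closure of the zero submodule in $F^e(R_F/(x,y)R_F) \cong R_F/(x,y)^{[q]}R_F$ is the image of $(x,y)^q$ in $R_F/(x^q,y^q)R_F$, so that $G^e(R_F/(x,y)) \cong R_F/(x,y)^q R_F$. -/

import Mathlib

open TensorProduct

/-- `R` viewed as an `R`-algebra via the `e`-th iterated Frobenius `r ↦ r^(p^e)`. -/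
def FrobAlg (R : Type*) (p e : ℕ) : Type _ := R

instance {R : Type*} [CommRing R] {p e : ℕ} : CommRing (FrobAlg R p e) := ‹CommRing R›

noncomputable instance {R : Type*} [CommRing R] {p e : ℕ} [ExpChar R p] :
    Algebra R (FrobAlg R p e) :=
  (show R →+* FrobAlg R p e from iterateFrobenius R p e).toAlgebra

/-- The image `N^{[q]}_M` of `F^e(N)` in the Peskine–Szpiro base change
`F^e(M) = S ⊗_R M` (where `S` is `R` viewed via the `e`-th Frobenius):
the `S`-submodule generated by the elements `1 ⊗ n`, `n ∈ N`. -/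
noncomputable def FrobPow {R : Type*} [CommRing R] (p e : ℕ) [ExpChar R p]
    {M : Type*} [AddCommGroup M] [Module R M] (N : Submodule R M) :
    Submodule (FrobAlg R p e) (TensorProduct R (FrobAlg R p e) M) :=
  Submodule.span (FrobAlg R p e)
    ((fun n => (1 : FrobAlg R p e) ⊗ₜ[R] n) '' (N : Set M))

/-- `R⁰`: the elements of `R` lying in no minimal prime. -/
def RZero (R : Type*) [CommRing R] : Set R := { c | ∀ P ∈ minimalPrimes R, c ∉ P }

/-- The tight closure `N^*_M`: all `m ∈ M` such that for some `c ∈ R⁰`,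
`c·m^q ∈ N^{[q]}_M` for all `q = p^e ≫ 0`. -/
noncomputable def TightClosure (R : Type*) [CommRing R] (p : ℕ) [ExpChar R p]
    {M : Type*} [AddCommGroup M] [Module R M] (N : Submodule R M) : Set M :=
  { m | ∃ c ∈ RZero R, ∃ E : ℕ, ∀ e, E ≤ e →
      (show FrobAlg R p e from c) • ((1 : FrobAlg R p e) ⊗ₜ[R] m) ∈ FrobPow p e N }

open MvPolynomial

/-! Tight closure of an ideal in a reduced ring with finitely many minimal primes is tested modulo
each minimal prime: if `dᵢ` is nonzero in the `i`-th branch and vanishes in all the others, then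
multipliers `cᵢ` that work in the branches glue to the single multiplier `∑ dᵢ cᵢ`. The branches of
`k[x,y]/(∏ ℓᵢ)` are the lines `ℓᵢ = 0`, whose coordinate rings `k[t]` are principal ideal domains,
where every ideal is tightly closed. So `f` lies in the tight closure of `(x^q, y^q)` exactly when
`t^q` divides the restriction of `f` to every line. That means that the homogeneous components of
degree `< q` of `f` vanish on every line; these components are then multiples of `∏ ℓᵢ`, and
`f ∈ (x,y)^q` modulo `∏ ℓᵢ`. -/

section TightClosure

variable {R : Type*} [CommRing R] (p : ℕ) [ExpChar R p]

/-- The Frobenius power `I^{[p^e]}`, generated by the `p^e`-th powers of the elements of `I`. -/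
abbrev frobeniusPower (e : ℕ) (I : Ideal R) : Ideal R :=
  I.map (iterateFrobenius R p e)

/-- The tight closure `I^*` of an ideal; `tightClosure_bot_quotient_eq_image` relates it to the
tight closure of a submodule. -/
def idealTightClosure (I : Ideal R) : Set R :=
  {r | ∃ c ∈ RZero R, ∃ E : ℕ, ∀ e, E ≤ e → c * r ^ p ^ e ∈ frobeniusPower p e I}

theorem smul_one_tmul_mk_mem_frobPow_bot_iff (e : ℕ) (I : Ideal R) (c r : R) :
    (show FrobAlg R p e from c) • ((1 : FrobAlg R p e) ⊗ₜ[R] (Ideal.Quotient.mk I r : R ⧸ I)) ∈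
      FrobPow p e (⊥ : Submodule R (R ⧸ I)) ↔ c * r ^ p ^ e ∈ frobeniusPower p e I := by
  have frobPow_bot : FrobPow p e (⊥ : Submodule R (R ⧸ I)) = ⊥ := by simp [FrobPow]
  rw [frobPow_bot, Submodule.mem_bot, TensorProduct.smul_tmul', smul_eq_mul, mul_one,
    ← (TensorProduct.tensorQuotEquivQuotSMul (FrobAlg R p e) I).map_eq_zero_iff,
    TensorProduct.tensorQuotEquivQuotSMul_tmul_mk, Submodule.Quotient.mk_eq_zero,
    Ideal.smul_top_eq_map, Submodule.restrictScalars_mem, Algebra.smul_def, mul_comm]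
  rfl

theorem tightClosure_bot_quotient_eq_image (I : Ideal R) :
    TightClosure R p (⊥ : Submodule R (R ⧸ I)) =
      Ideal.Quotient.mk I '' idealTightClosure p I := by
  have mk_mem_iff (r : R) : Ideal.Quotient.mk I r ∈ TightClosure R p (⊥ : Submodule R (R ⧸ I)) ↔
      r ∈ idealTightClosure p I := by
    simp only [TightClosure, idealTightClosure, Set.mem_ofPred_eq,
      smul_one_tmul_mk_mem_frobPow_bot_iff]
  ext m
  constructor
  · obtain ⟨r, rfl⟩ := Ideal.Quotient.mk_surjective m
    exact fun hr => ⟨r, (mk_mem_iff r).1 hr, rfl⟩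
  · rintro ⟨r, hr, rfl⟩
    exact (mk_mem_iff r).2 hr

theorem map_frobeniusPower {S : Type*} [CommRing S] [ExpChar S p] (φ : R →+* S) (e : ℕ)
    (I : Ideal R) : (frobeniusPower p e I).map φ = frobeniusPower p e (I.map φ) := by
  rw [frobeniusPower, frobeniusPower, Ideal.map_map, Ideal.map_map, φ.iterateFrobenius_comm]

theorem one_mem_rZero : (1 : R) ∈ RZero R :=
  fun P hP => P.ne_top_iff_one.1 hP.1.1.ne_top

theorem subset_idealTightClosure (I : Ideal R) : (I : Set R) ⊆ idealTightClosure p I := by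
  intro r hr
  refine ⟨1, one_mem_rZero, 0, fun e _ => ?_⟩
  rw [one_mul, ← iterateFrobenius_def]
  exact Ideal.mem_map_of_mem _ hr

end TightClosure

section Domain

theorem mem_rZero_iff_ne_zero {S : Type*} [CommRing S] [IsDomain S] {c : S} :
    c ∈ RZero S ↔ c ≠ 0 := by
  simp [RZero, IsDomain.minimalPrimes_eq_singleton_bot]

theorem isIntegral_of_forall_mul_pow_mem_range {S K : Type*} [CommRing S] [IsNoetherianRing S]
    [CommRing K] [Algebra S K] {c x : K} (hc : IsLeftRegular c) {n : ℕ → ℕ} (hn : StrictMono n)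
    (h : ∀ e, c * x ^ n e ∈ (algebraMap S K).range) : IsIntegral S x := by
  choose s hs using h
  let J : ℕ →o Ideal S :=
    ⟨fun N => Ideal.span (s '' Set.Iio N),
      fun _ _ hMN => Ideal.span_mono (Set.image_mono (Set.Iio_subset_Iio hMN))⟩
  obtain ⟨N, hN⟩ := monotone_stabilizes_iff_noetherian.mpr ‹_› J
  have hsN : s N ∈ Ideal.span (s '' Finset.range N) := by
    rw [Finset.coe_range]
    change s N ∈ J N
    rw [hN (N + 1) N.le_succ]
    exact Ideal.subset_span ⟨N, N.lt_succ_self, rfl⟩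
  obtain ⟨b, hb⟩ := Submodule.mem_span_image_finset_iff_exists_fun S |>.1 hsN
  have hx : x ^ n N = ∑ e, algebraMap S K (b e) * x ^ n e := by
    refine hc (?_ : c * x ^ n N = c * _)
    rw [← hs, ← hb, map_sum, Finset.mul_sum]
    refine Finset.sum_congr rfl fun e _ => ?_
    rw [smul_eq_mul, map_mul, hs]
    ring
  refine ⟨Polynomial.X ^ n N - ∑ e, Polynomial.C (b e) * Polynomial.X ^ n e,
    Polynomial.monic_X_pow_sub ?_, ?_⟩
  · refine (Polynomial.degree_sum_le _ _).trans_lt ?_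
    refine (Finset.sup_lt_iff (WithBot.bot_lt_coe _)).2 fun e _ => ?_
    exact (Polynomial.degree_C_mul_X_pow_le _ _).trans_lt
      (WithBot.coe_lt_coe.2 (hn (Finset.mem_range.1 e.2)))
  · simp [Polynomial.eval₂_finsetSum, hx]

variable {S : Type*} [CommRing S] [IsDomain S] (p : ℕ) [Fact p.Prime] [CharP S p]

theorem idealTightClosure_span_singleton [IsNoetherianRing S] [IsIntegrallyClosed S] (a : S) :
    idealTightClosure p (Ideal.span {a}) = Ideal.span {a} := by
  refine (subset_idealTightClosure p _).antisymm' ?_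
  rintro r ⟨c, hc, E, h⟩
  replace hc : c ≠ 0 := mem_rZero_iff_ne_zero.1 hc
  have hdvd (e : ℕ) (he : E ≤ e) : a ^ p ^ e ∣ c * r ^ p ^ e := by
    simpa only [frobeniusPower, Ideal.map_span, Set.image_singleton, iterateFrobenius_def,
      Ideal.mem_span_singleton] using h e he
  rw [SetLike.mem_coe, Ideal.mem_span_singleton]
  have hp : 1 < p := (Fact.out : p.Prime).one_lt
  obtain rfl | ha := eq_or_ne a 0
  · have hpos : p ^ E ≠ 0 := (Nat.pow_pos (by omega)).ne'
    have hzero : c * r ^ p ^ E = 0 := by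
      simpa only [zero_pow hpos, zero_dvd_iff] using hdvd E le_rfl
    obtain rfl : r = 0 := (pow_eq_zero_iff hpos).1 ((mul_eq_zero.1 hzero).resolve_left hc)
    exact dvd_rfl
  let K := FractionRing S
  have ha' : algebraMap S K a ≠ 0 := by simpa using ha
  have hint : IsIntegral S (algebraMap S K r / algebraMap S K a) := by
    refine isIntegral_of_forall_mul_pow_mem_range (c := algebraMap S K c)
      (IsRegular.of_ne_zero (by simpa using hc)).left (n := fun e => p ^ (E + e))
      (fun _ _ hij => Nat.pow_lt_pow_right hp (by omega)) fun e => ?_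
    obtain ⟨t, ht⟩ := hdvd (E + e) (by omega)
    refine ⟨t, ?_⟩
    rw [div_pow, mul_div_assoc', eq_div_iff (pow_ne_zero _ ha'), mul_comm]
    simp only [← map_pow, ← map_mul, ht]
  obtain ⟨t, ht⟩ := IsIntegrallyClosed.isIntegral_iff.1 hint
  refine ⟨t, IsFractionRing.injective S K ?_⟩
  rw [map_mul, ht, mul_div_cancel₀ _ ha']

theorem idealTightClosure_eq_self [IsPrincipalIdealRing S] (I : Ideal S) :
    idealTightClosure p I = I := by
  obtain ⟨a, rfl⟩ := IsPrincipalIdealRing.principal I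
  exact idealTightClosure_span_singleton p a

end Domain

section MinimalPrimes

variable {R ι : Type*} [CommRing R] {S : ι → Type*} [∀ i, CommRing (S i)] {φ : ∀ i, R →+* S i}

theorem mul_mem_of_map_mem {J : Ideal R} {i : ι} (hsurj : Function.Surjective (φ i))
    (hker : ⨅ i, RingHom.ker (φ i) = ⊥) {d r : R} (hd : ∀ j, j ≠ i → φ j d = 0)
    (hr : φ i r ∈ J.map (φ i)) : d * r ∈ J := by
  obtain ⟨z, hz, hzr⟩ := (Ideal.mem_map_iff_of_surjective _ hsurj).1 hr
  have hdz : d * r - d * z = 0 := by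
    rw [← Ideal.mem_bot, ← hker, Ideal.mem_iInf]
    intro j
    rw [RingHom.mem_ker, ← mul_sub, map_mul, map_sub]
    obtain rfl | hj := eq_or_ne j i
    · rw [hzr, sub_self, mul_zero]
    · rw [hd j hj, zero_mul]
  rw [sub_eq_zero.1 hdz]
  exact J.mul_mem_left d hz

variable [Finite ι]

theorem minimalPrimes_iInf_eq_range {P : ι → Ideal R} [hP : ∀ i, (P i).IsPrime]
    (hanti : Pairwise fun i j => ¬P i ≤ P j) : (⨅ i, P i).minimalPrimes = Set.range P := by
  have := Fintype.ofFinite ι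
  have exists_le {Q : Ideal R} (hQ : Q.IsPrime) (hle : ⨅ i, P i ≤ Q) : ∃ i, P i ≤ Q := by
    rw [← Finset.inf_univ_eq_iInf] at hle
    simpa using hQ.inf_le'.1 hle
  ext Q
  constructor
  · intro hQ
    obtain ⟨i, hi⟩ := exists_le hQ.1.1 hQ.1.2
    exact ⟨i, hi.antisymm (hQ.2 ⟨hP i, iInf_le P i⟩ hi)⟩
  · rintro ⟨i, rfl⟩
    refine ⟨⟨hP i, iInf_le P i⟩, fun Q hQ hle => ?_⟩
    obtain ⟨j, hj⟩ := exists_le hQ.1 hQ.2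
    obtain rfl : j = i := hanti.eq (not_not.2 (hj.trans hle))
    exact hj

variable [∀ i, IsDomain (S i)]

theorem mem_rZero_iff_forall_map_ne_zero (hker : ⨅ i, RingHom.ker (φ i) = ⊥)
    (hanti : Pairwise fun i j => ¬RingHom.ker (φ i) ≤ RingHom.ker (φ j)) {c : R} :
    c ∈ RZero R ↔ ∀ i, φ i c ≠ 0 := by
  have (i : ι) : (RingHom.ker (φ i)).IsPrime := RingHom.ker_isPrime _
  have hmin : minimalPrimes R = Set.range fun i => RingHom.ker (φ i) := by
    rw [← minimalPrimes_iInf_eq_range hanti, hker]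
  simp only [RZero, hmin, Set.forall_mem_range, Set.mem_ofPred_eq, RingHom.mem_ker, ne_eq]

theorem exists_map_ne_zero_and_forall_ne_map_eq_zero
    (hanti : Pairwise fun i j => ¬RingHom.ker (φ i) ≤ RingHom.ker (φ j)) (i : ι) :
    ∃ d, φ i d ≠ 0 ∧ ∀ j, j ≠ i → φ j d = 0 := by
  classical
  have := Fintype.ofFinite ι
  have : (RingHom.ker (φ i)).IsPrime := RingHom.ker_isPrime _
  have hnot : ¬(Finset.univ.erase i).inf (fun j => RingHom.ker (φ j)) ≤ RingHom.ker (φ i) := by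
    intro hle
    obtain ⟨j, hj, hji⟩ := this.inf_le'.1 hle
    exact hanti (Finset.ne_of_mem_erase hj) hji
  obtain ⟨d, hd, hdi⟩ := SetLike.not_le_iff_exists.1 hnot
  exact ⟨d, hdi, by simpa [Submodule.mem_finsetInf] using hd⟩

theorem mem_idealTightClosure_iff_forall_map (p : ℕ) [ExpChar R p] [∀ i, ExpChar (S i) p]
    (hsurj : ∀ i, Function.Surjective (φ i)) (hker : ⨅ i, RingHom.ker (φ i) = ⊥)
    (hanti : Pairwise fun i j => ¬RingHom.ker (φ i) ≤ RingHom.ker (φ j)) {I : Ideal R} {r : R} :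
    r ∈ idealTightClosure p I ↔ ∀ i, φ i r ∈ idealTightClosure p (I.map (φ i)) := by
  have := Fintype.ofFinite ι
  constructor
  · rintro ⟨c, hc, E, h⟩ i
    refine ⟨φ i c, mem_rZero_iff_ne_zero.2 ((mem_rZero_iff_forall_map_ne_zero hker hanti).1 hc i),
      E, fun e he => ?_⟩
    rw [← map_pow, ← map_mul, ← map_frobeniusPower]
    exact Ideal.mem_map_of_mem _ (h e he)
  · intro h
    choose c' hc' E hE using h
    choose c hc using fun i => hsurj i (c' i)
    choose d hdi hdj using exists_map_ne_zero_and_forall_ne_map_eq_zero hanti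
    refine ⟨∑ i, d i * c i, (mem_rZero_iff_forall_map_ne_zero hker hanti).2 fun i => ?_,
      Finset.univ.sup E, fun e he => ?_⟩
    · rw [map_sum, Finset.sum_eq_single i (fun j _ hj => by rw [map_mul, hdj j i hj.symm, zero_mul])
        (by simp), map_mul, hc]
      exact mul_ne_zero (hdi i) (mem_rZero_iff_ne_zero.1 (hc' i))
    · rw [Finset.sum_mul]
      refine Ideal.sum_mem _ fun i _ => ?_
      rw [mul_assoc]
      refine mul_mem_of_map_mem (hsurj i) hker (hdj i) ?_
      rw [map_frobeniusPower, map_mul, map_pow, hc]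
      exact hE i e ((Finset.le_sup (Finset.mem_univ i)).trans he)

end MinimalPrimes

section RestrictToLine

variable {σ R : Type*} [CommRing R]

/-- Restriction of polynomials to the line through the origin with direction `v`, parametrised
by `t ↦ t v`. -/
noncomputable def restrictToLine (v : σ → R) : MvPolynomial σ R →ₐ[R] Polynomial R :=
  aeval fun i => Polynomial.C (v i) * Polynomial.X

theorem restrictToLine_X (v : σ → R) (i : σ) :
    restrictToLine v (X i) = Polynomial.C (v i) * Polynomial.X :=
  aeval_X _ i

theorem restrictToLine_C (v : σ → R) (c : R) : restrictToLine v (C c) = Polynomial.C c :=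
  algHom_C _ c

theorem restrictToLine_monomial (v : σ → R) (m : σ →₀ ℕ) (c : R) :
    restrictToLine v (monomial m c) =
      Polynomial.monomial m.degree (c * m.prod fun i n => v i ^ n) := by
  simp only [restrictToLine, aeval_monomial, Finsupp.prod, mul_pow, Finset.prod_mul_distrib,
    Finset.prod_pow_eq_pow_sum, Finsupp.degree_apply, ← Polynomial.C_mul_X_pow_eq_monomial, map_mul,
    map_prod, map_pow, Polynomial.algebraMap_eq, mul_assoc]

theorem restrictToLine_homogeneousComponent (v : σ → R) (d : ℕ) (f : MvPolynomial σ R) :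
    restrictToLine v (homogeneousComponent d f) =
      Polynomial.monomial d ((restrictToLine v f).coeff d) := by
  induction f using MvPolynomial.induction_on' with
  | monomial m c =>
    rw [homogeneousComponent_of_mem (isHomogeneous_monomial c rfl), restrictToLine_monomial,
      Polynomial.coeff_monomial]
    obtain rfl | hd := eq_or_ne d m.degree
    · rw [if_pos rfl, if_pos rfl, restrictToLine_monomial]
    · rw [if_neg hd, if_neg hd.symm, map_zero, map_zero]
  | add f g hf hg => simp only [map_add, hf, hg, Polynomial.coeff_add]

theorem sub_sum_homogeneousComponent_mem_pow_idealOfVars (q : ℕ) (f : MvPolynomial σ R) :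
    f - ∑ d ∈ Finset.range q, homogeneousComponent d f ∈ idealOfVars σ R ^ q := by
  rw [mem_pow_idealOfVars_iff']
  intro m hm
  simp [coeff_sum, coeff_homogeneousComponent, hm]

theorem map_idealOfVars_fin_two {A : Type*} [CommRing A] (φ : MvPolynomial (Fin 2) R →+* A) :
    (idealOfVars (Fin 2) R).map φ = Ideal.span {φ (X 0), φ (X 1)} := by
  have hrange : Set.range (X : Fin 2 → MvPolynomial (Fin 2) R) = {X 0, X 1} := by
    ext f
    simp [Fin.exists_fin_two, eq_comm]
  rw [idealOfVars, hrange, Ideal.map_span, Set.image_pair]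

end RestrictToLine

section LinearForm

variable {k : Type*} [Field k]

/-- The binary linear form `a x + b y`. -/
noncomputable abbrev linearForm (a b : k) : MvPolynomial (Fin 2) k :=
  C a * X 0 + C b * X 1

/-- Restriction to the zero line of `a x + b y`, which has direction `(b, -a)`. -/
noncomputable abbrev restrictToZeroLine (a b : k) : MvPolynomial (Fin 2) k →ₐ[k] Polynomial k :=
  restrictToLine ![b, -a]

theorem restrictToZeroLine_linearForm (a b c d : k) :
    restrictToZeroLine a b (linearForm c d) = Polynomial.C (c * b - a * d) * Polynomial.X := by
  simp only [map_add, map_mul, restrictToLine_C, restrictToLine_X, Matrix.cons_val_zero,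
    Matrix.cons_val_one, map_sub, map_neg]
  ring

theorem restrictToZeroLine_linearForm_self (a b : k) :
    restrictToZeroLine a b (linearForm a b) = 0 := by
  rw [restrictToZeroLine_linearForm, sub_self, map_zero, zero_mul]

theorem restrictToZeroLine_linearForm_ne_zero {a b c d : k} (h : a * d ≠ c * b) :
    restrictToZeroLine a b (linearForm c d) ≠ 0 := by
  rw [restrictToZeroLine_linearForm]
  exact mul_ne_zero (Polynomial.C_ne_zero.2 (sub_ne_zero.2 h.symm)) Polynomial.X_ne_zero

theorem exists_mul_sub_mul_eq_one {a b : k} (hab : ¬(a = 0 ∧ b = 0)) :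
    ∃ u v : k, u * b - a * v = 1 := by
  obtain rfl | hb := eq_or_ne b 0
  · have ha : a ≠ 0 := fun ha => hab ⟨ha, rfl⟩
    exact ⟨0, -a⁻¹, by simp [ha]⟩
  · exact ⟨b⁻¹, 0, by simp [hb]⟩

theorem linearForm_dvd_aeval_restrictToZeroLine_sub {a b u v : k} (huv : u * b - a * v = 1)
    (f : MvPolynomial (Fin 2) k) :
    linearForm a b ∣ Polynomial.aeval (linearForm u v) (restrictToZeroLine a b f) - f := by
  let π := Ideal.Quotient.mkₐ k (Ideal.span {linearForm a b})
  suffices h : (π.comp (Polynomial.aeval (linearForm u v))).comp (restrictToZeroLine a b) = π by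
    rw [← Ideal.mem_span_singleton, ← Ideal.Quotient.eq]
    exact DFunLike.congr_fun h f
  have hC : (C u * C b - C a * C v : MvPolynomial (Fin 2) k) = 1 := by
    rw [← map_mul, ← map_mul, ← map_sub, huv, map_one]
  refine algHom_ext fun i => Ideal.Quotient.eq.2 (Ideal.mem_span_singleton.2 ?_)
  change _ ∣ Polynomial.aeval (linearForm u v) (restrictToZeroLine a b (X i)) - X i
  rw [restrictToLine_X, map_mul, Polynomial.aeval_C, Polynomial.aeval_X,
    algebraMap_eq]
  fin_cases i
  · exact ⟨C v, by simp; linear_combination X 0 * hC⟩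
  · exact ⟨-C u, by simp; linear_combination X 1 * hC⟩

theorem restrictToZeroLine_eq_zero_iff {a b : k} (hab : ¬(a = 0 ∧ b = 0))
    {f : MvPolynomial (Fin 2) k} : restrictToZeroLine a b f = 0 ↔ linearForm a b ∣ f := by
  constructor
  · intro hf
    obtain ⟨u, v, huv⟩ := exists_mul_sub_mul_eq_one hab
    simpa [hf] using linearForm_dvd_aeval_restrictToZeroLine_sub huv f
  · rintro ⟨g, rfl⟩
    rw [map_mul, restrictToZeroLine_linearForm_self, zero_mul]

theorem restrictToZeroLine_surjective {a b : k} (hab : ¬(a = 0 ∧ b = 0)) :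
    Function.Surjective (restrictToZeroLine a b) := by
  obtain ⟨u, v, huv⟩ := exists_mul_sub_mul_eq_one hab
  refine fun g => ⟨Polynomial.aeval (linearForm u v) g, ?_⟩
  rw [← Polynomial.aeval_algHom_apply, restrictToZeroLine_linearForm, huv, map_one, one_mul,
    Polynomial.aeval_X_left_apply]

theorem linearForm_ne_zero {a b : k} (hab : ¬(a = 0 ∧ b = 0)) : linearForm a b ≠ 0 := by
  intro h
  exact hab ⟨by simpa using congrArg (eval ![1, 0]) h, by simpa using congrArg (eval ![0, 1]) h⟩

theorem linearForm_prime {a b : k} (hab : ¬(a = 0 ∧ b = 0)) : Prime (linearForm a b) := by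
  refine ⟨linearForm_ne_zero hab, fun hu => ?_, fun f g h => ?_⟩
  · simpa using (restrictToZeroLine_eq_zero_iff hab (f := 1)).2 hu.dvd
  · simpa only [← restrictToZeroLine_eq_zero_iff hab, map_mul, mul_eq_zero] using h

theorem linearForm_not_dvd_linearForm {a b c d : k} (hab : ¬(a = 0 ∧ b = 0))
    (h : a * d ≠ c * b) : ¬linearForm a b ∣ linearForm c d := by
  rw [← restrictToZeroLine_eq_zero_iff hab]
  exact restrictToZeroLine_linearForm_ne_zero h

theorem span_pair_C_mul_X_pow {a b : k} (hab : ¬(a = 0 ∧ b = 0)) (q : ℕ) :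
    Ideal.span {(Polynomial.C b * Polynomial.X) ^ q, (Polynomial.C (-a) * Polynomial.X) ^ q} =
      Ideal.span {Polynomial.X ^ q} := by
  rw [mul_pow, mul_pow, Ideal.span_insert]
  obtain rfl | hb := eq_or_ne b 0
  · have ha : -a ≠ 0 := neg_ne_zero.2 fun ha => hab ⟨ha, rfl⟩
    rw [Ideal.span_singleton_mul_left_unit ((Polynomial.isUnit_C.2 ha.isUnit).pow q), sup_eq_right,
      Ideal.span_singleton_le_span_singleton]
    exact dvd_mul_left _ _
  · rw [Ideal.span_singleton_mul_left_unit ((Polynomial.isUnit_C.2 hb.isUnit).pow q), sup_eq_left,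
      Ideal.span_singleton_le_span_singleton]
    exact dvd_mul_left _ _

end LinearForm

section LineArrangement

variable {k ι : Type*} [Field k] [Fintype ι] {a b : ι → k}

/-- The coordinate ring `k[x,y]/(∏ ℓᵢ)` of the union of the lines `ℓᵢ = aᵢ x + bᵢ y = 0`. -/
abbrev LineArrangementRing (a b : ι → k) : Type _ :=
  MvPolynomial (Fin 2) k ⧸ Ideal.span {∏ i, linearForm (a i) (b i)}

theorem prod_linearForm_dvd_iff (hab : ∀ i, ¬(a i = 0 ∧ b i = 0))
    (hpair : ∀ i j, i ≠ j → a i * b j ≠ a j * b i) {f : MvPolynomial (Fin 2) k} :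
    ∏ i, linearForm (a i) (b i) ∣ f ↔ ∀ i, restrictToZeroLine (a i) (b i) f = 0 := by
  simp only [restrictToZeroLine_eq_zero_iff (hab _)]
  refine ⟨fun h i => ?_, fun h => ?_⟩
  · exact (Finset.dvd_prod_of_mem (fun j => linearForm (a j) (b j)) (Finset.mem_univ i)).trans h
  · refine Fintype.prod_dvd_of_isRelPrime (fun i j hij => ?_) h
    change IsRelPrime (linearForm (a i) (b i)) (linearForm (a j) (b j))
    rw [(linearForm_prime (hab i)).irreducible.isRelPrime_iff_not_dvd]
    exact linearForm_not_dvd_linearForm (hab i) (hpair i j hij)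

theorem restrictToZeroLine_prod_linearForm (i : ι) :
    restrictToZeroLine (a i) (b i) (∏ j, linearForm (a j) (b j)) = 0 := by
  rw [map_prod]
  exact Finset.prod_eq_zero (Finset.mem_univ i) (restrictToZeroLine_linearForm_self _ _)

/-- Restriction of functions on the union of the lines `ℓⱼ = 0` to the `i`-th line. -/
noncomputable def restrictToBranch (a b : ι → k) (i : ι) :
    LineArrangementRing a b →+* Polynomial k :=
  Ideal.Quotient.lift _ (restrictToZeroLine (a i) (b i)).toRingHom <|
    (Ideal.span_singleton_le_iff_mem (RingHom.ker _)).2 (restrictToZeroLine_prod_linearForm i)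

theorem restrictToBranch_mk (i : ι) (f : MvPolynomial (Fin 2) k) :
    restrictToBranch a b i (Ideal.Quotient.mk _ f) = restrictToZeroLine (a i) (b i) f :=
  rfl

theorem restrictToBranch_mk_X_zero (i : ι) :
    restrictToBranch a b i (Ideal.Quotient.mk _ (X 0)) = Polynomial.C (b i) * Polynomial.X :=
  restrictToLine_X _ 0

theorem restrictToBranch_mk_X_one (i : ι) :
    restrictToBranch a b i (Ideal.Quotient.mk _ (X 1)) = Polynomial.C (-a i) * Polynomial.X :=
  restrictToLine_X _ 1

theorem restrictToBranch_surjective (hab : ∀ i, ¬(a i = 0 ∧ b i = 0)) (i : ι) :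
    Function.Surjective (restrictToBranch a b i) :=
  Ideal.Quotient.lift_surjective_of_surjective _ _ (restrictToZeroLine_surjective (hab i))

theorem iInf_ker_restrictToBranch (hab : ∀ i, ¬(a i = 0 ∧ b i = 0))
    (hpair : ∀ i j, i ≠ j → a i * b j ≠ a j * b i) :
    ⨅ i, RingHom.ker (restrictToBranch a b i) = ⊥ := by
  refine (Submodule.eq_bot_iff _).2 fun r hr => ?_
  obtain ⟨f, rfl⟩ := Ideal.Quotient.mk_surjective r
  rw [Ideal.Quotient.eq_zero_iff_mem, Ideal.mem_span_singleton, prod_linearForm_dvd_iff hab hpair]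
  exact (Submodule.mem_iInf _).1 hr

theorem pairwise_not_ker_restrictToBranch_le (hpair : ∀ i j, i ≠ j → a i * b j ≠ a j * b i) :
    Pairwise fun i j =>
      ¬RingHom.ker (restrictToBranch a b i) ≤ RingHom.ker (restrictToBranch a b j) := by
  intro i j hij hle
  refine restrictToZeroLine_linearForm_ne_zero (hpair j i hij.symm) ?_
  rw [← restrictToBranch_mk, ← RingHom.mem_ker]
  exact hle (restrictToZeroLine_linearForm_self _ _)

theorem map_restrictToBranch_span_pow {i : ι} (hab : ¬(a i = 0 ∧ b i = 0)) (q : ℕ) :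
    (Ideal.span {Ideal.Quotient.mk _ (X 0) ^ q, Ideal.Quotient.mk _ (X 1) ^ q}).map
      (restrictToBranch a b i) = Ideal.span {Polynomial.X ^ q} := by
  rw [Ideal.map_span, Set.image_pair, map_pow, map_pow, restrictToBranch_mk_X_zero,
    restrictToBranch_mk_X_one, span_pair_C_mul_X_pow hab]

theorem mk_mem_span_pow_iff (hab : ∀ i, ¬(a i = 0 ∧ b i = 0))
    (hpair : ∀ i j, i ≠ j → a i * b j ≠ a j * b i) {q : ℕ} {r : LineArrangementRing a b} :
    r ∈ Ideal.span {Ideal.Quotient.mk _ (X 0), Ideal.Quotient.mk _ (X 1)} ^ q ↔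
      ∀ i, Polynomial.X ^ q ∣ restrictToBranch a b i r := by
  constructor
  · intro hr i
    have hmap := map_restrictToBranch_span_pow (hab i) 1
    simp only [pow_one] at hmap
    rw [← Ideal.mem_span_singleton, ← Ideal.span_singleton_pow, ← hmap, ← Ideal.map_pow]
    exact Ideal.mem_map_of_mem _ hr
  · intro hr
    obtain ⟨f, rfl⟩ := Ideal.Quotient.mk_surjective r
    have hlow : ∏ i, linearForm (a i) (b i) ∣ ∑ d ∈ Finset.range q, homogeneousComponent d f := by
      refine Finset.dvd_sum fun d hd => (prod_linearForm_dvd_iff hab hpair).2 fun i => ?_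
      have hdvd : Polynomial.X ^ q ∣ restrictToZeroLine (a i) (b i) f := hr i
      rw [restrictToLine_homogeneousComponent,
        Polynomial.X_pow_dvd_iff.1 hdvd d (Finset.mem_range.1 hd), map_zero]
    have hmk : Ideal.Quotient.mk (Ideal.span {∏ i, linearForm (a i) (b i)}) f =
        Ideal.Quotient.mk _ (f - ∑ d ∈ Finset.range q, homogeneousComponent d f) := by
      rw [Ideal.Quotient.eq, sub_sub_cancel, Ideal.mem_span_singleton]
      exact hlow
    rw [hmk, ← map_idealOfVars_fin_two, ← Ideal.map_pow]
    exact Ideal.mem_map_of_mem _ (sub_sum_homogeneousComponent_mem_pow_idealOfVars q f)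

theorem idealTightClosure_span_pow (p : ℕ) [Fact p.Prime] [CharP k p]
    [CharP (LineArrangementRing a b) p] (hab : ∀ i, ¬(a i = 0 ∧ b i = 0))
    (hpair : ∀ i j, i ≠ j → a i * b j ≠ a j * b i) (q : ℕ) :
    idealTightClosure p (Ideal.span {(Ideal.Quotient.mk _ (X 0) : LineArrangementRing a b) ^ q,
        Ideal.Quotient.mk _ (X 1) ^ q}) =
      ↑(Ideal.span {(Ideal.Quotient.mk _ (X 0) : LineArrangementRing a b),
        Ideal.Quotient.mk _ (X 1)} ^ q) := by
  ext r
  rw [mem_idealTightClosure_iff_forall_map p (restrictToBranch_surjective hab)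
    (iInf_ker_restrictToBranch hab hpair) (pairwise_not_ker_restrictToBranch_le hpair),
    SetLike.mem_coe, mk_mem_span_pow_iff hab hpair]
  refine forall_congr' fun i => ?_
  rw [map_restrictToBranch_span_pow (hab i), idealTightClosure_eq_self, SetLike.mem_coe,
    Ideal.mem_span_singleton]

theorem stmt_11_general (p : ℕ) [Fact p.Prime] [CharP k p] [CharP (LineArrangementRing a b) p]
    (hab : ∀ i, ¬(a i = 0 ∧ b i = 0)) (hpair : ∀ i j, i ≠ j → a i * b j ≠ a j * b i) (q : ℕ)
    {Iq : Ideal (LineArrangementRing a b)}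
    (hIq : Iq = Ideal.span {Ideal.Quotient.mk _ (X 0) ^ q, Ideal.Quotient.mk _ (X 1) ^ q}) :
    TightClosure (LineArrangementRing a b) p (⊥ : Submodule _ (LineArrangementRing a b ⧸ Iq)) =
      ((Ideal.span {(Ideal.Quotient.mk _ (X 0) : LineArrangementRing a b),
        Ideal.Quotient.mk _ (X 1)} ^ q).map (Ideal.Quotient.mk Iq) :
        Set (LineArrangementRing a b ⧸ Iq)) := by
  rw [tightClosure_bot_quotient_eq_image, hIq, idealTightClosure_span_pow p hab hpair]
  ext m
  exact (Ideal.mem_map_iff_of_surjective _ Ideal.Quotient.mk_surjective).symm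

end LineArrangement

/-- For `k` algebraically closed of characteristic `p`, `F ∈ k[x,y]` a product of `s`
pairwise non-associate linear forms, `R_F = k[x,y]/(F)` and `q = p^e`: the tight closure
of `0` in `F^e(R_F/(x,y)) ≅ R_F/(x^q,y^q)` is the image of `(x,y)^q`. -/
theorem stmt_11 (k : Type*) [Field k] [IsAlgClosed k] (p : ℕ) [Fact p.Prime] [CharP k p]
    (e : ℕ) (he : 1 ≤ e) (q : ℕ) (hq : q = p ^ e)
    (s : ℕ) (hs1 : 1 ≤ s) (hsq : s ≤ q)
    (a b : Fin s → k) (hab : ∀ i, ¬(a i = 0 ∧ b i = 0))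
    (hpair : ∀ i j, i ≠ j → a i * b j ≠ a j * b i)
    (F : MvPolynomial (Fin 2) k)
    (hF : F = ∏ i, (C (a i) * X 0 + C (b i) * X 1))
    [CharP (MvPolynomial (Fin 2) k ⧸ Ideal.span {F}) p]
    (Iq : Ideal (MvPolynomial (Fin 2) k ⧸ Ideal.span {F}))
    (hIq : Iq = Ideal.span
      {Ideal.Quotient.mk (Ideal.span {F}) (X 0 : MvPolynomial (Fin 2) k) ^ q,
       Ideal.Quotient.mk (Ideal.span {F}) (X 1 : MvPolynomial (Fin 2) k) ^ q}) :
    TightClosure (MvPolynomial (Fin 2) k ⧸ Ideal.span {F}) p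
        (⊥ : Submodule (MvPolynomial (Fin 2) k ⧸ Ideal.span {F})
          ((MvPolynomial (Fin 2) k ⧸ Ideal.span {F}) ⧸ Iq)) =
      ((Ideal.map (Ideal.Quotient.mk Iq)
        ((Ideal.span {Ideal.Quotient.mk (Ideal.span {F}) (X 0 : MvPolynomial (Fin 2) k),
          Ideal.Quotient.mk (Ideal.span {F}) (X 1 : MvPolynomial (Fin 2) k)}) ^ q)) :
        Set ((MvPolynomial (Fin 2) k ⧸ Ideal.span {F}) ⧸ Iq)) := by
  subst hF
  exact stmt_11_general p hab hpair q hIq
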